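/- Q_1(2,k) > β^k for all sufficiently large k, where β = β_{2,1} ≈ 1.08239 is the smallest positive real root of y^4 - 8y^2 + 8 = 0; equivalently β = sqrt(2/(1 + 1/√2)). -/

import Mathlib

/-- `x` is a `k`-term quasi-progression of diameter `n`: for some positive `d`, all
successive differences lie in `[d, d+n]`. -/
def IsQuasiProg (n k : ℕ) (x : ℕ → ℕ) : Prop :=
  ∃ d : ℕ, 1 ≤ d ∧ ∀ j, j + 1 < k → x j + d ≤ x (j + 1) ∧ x (j + 1) ≤ x j + d + n

/-- `Q_n(r,k)`: least `N` such that every `r`-coloring of `{1,...,N}` yields a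
monochromatic `k`-term quasi-progression of diameter `n`. -/
noncomputable def Q (n r k : ℕ) : ℕ :=
  sInf {N | ∀ χ : ℕ → Fin r, ∃ x : ℕ → ℕ,
    (∀ j < k, x j ∈ Finset.Icc 1 N) ∧ (∀ j < k, χ (x j) = χ (x 0)) ∧ IsQuasiProg n k x}

/-!
Colour `{1, 2, ...}` uniformly at random with `r` colours. Encode a `k`-term quasi-progression of
diameter `1` by its first term `a`, its low difference `d` and a word of `k - 1` bits, a bit
recording whether the step is `d` or `d + 1`. If a step `d + 1` is followed by a step `d`, the
vertex between them can be moved one to the left. Hence, if there is a monochromatic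
quasi-progression with given `a`, `d` and `k`, the lexicographically least one is such that none of
the points skipped by these moves has its colour, so a word with `s` descents contributes only
`r ^ (1 - k) * q ^ s` to the union bound, where `q = 1 - 1 / r`. Summed over all words the factors
`q ^ s` amount to `O((1 + √q) ^ (k - 1))` instead of `2 ^ (k - 1)`. There are at most
`N * (N / (k - 1))` pairs `(a, d)`, so if `N ^ 2 ≤ (r / (1 + √q)) ^ k` and `k > r` there is a
colouring of `{1, ..., N}` without a monochromatic `k`-term quasi-progression.
-/

section DescentCount

/-- The number of descents of a binary word, i.e. of places where `true` is directly followed by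
`false`. -/
def descents : List Bool → ℕ
  | [] => 0
  | false :: w => descents w
  | [true] => 0
  | true :: true :: w => descents (true :: w)
  | true :: false :: w => descents w + 1

lemma sum_vector_succ {α M : Type*} [Fintype α] [AddCommMonoid M] (m : ℕ)
    (f : List.Vector α (m + 1) → M) :
    ∑ v, f v = ∑ a, ∑ v : List.Vector α m, f (a ::ᵥ v) := by
  let e : List.Vector α (m + 1) ≃ α × List.Vector α m :=
    { toFun := fun v ↦ (v.head, v.tail)
      invFun := fun p ↦ p.1 ::ᵥ p.2
      left_inv := fun v ↦ v.cons_head_tail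
      right_inv := fun p ↦ by simp }
  rw [← Fintype.sum_prod_type', ← e.symm.sum_comp]
  rfl

/-- The sums `S` over all words and `T` over the words preceded by `true` satisfy `S' = S + T` and
`T' = t ^ 2 * S + T`; the bounds are proportional to the eigenvector `(1, t)` of this recursion. -/
lemma sum_pow_descents_le_and_cons_true_le {t : ℝ} (ht₀ : 0 ≤ t) (ht₁ : t ≤ 1) (m : ℕ) :
    t * ∑ v : List.Vector Bool m, (t ^ 2) ^ descents v.toList ≤ (1 + t) ^ m ∧
      ∑ v : List.Vector Bool m, (t ^ 2) ^ descents (true :: v.toList) ≤ (1 + t) ^ m := by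
  induction m with
  | zero => simp [descents, ht₁]
  | succ m ih =>
    obtain ⟨ih, ih_true⟩ := ih
    simp only [sum_vector_succ, Fintype.sum_bool, List.Vector.toList_cons, descents,
      pow_succ _ (descents _), ← Finset.sum_mul]
    have := mul_le_mul_of_nonneg_left ih ht₀
    have := mul_le_mul_of_nonneg_left ih_true ht₀
    constructor <;> linarith [pow_succ (1 + t) m]

lemma sum_pow_descents_le {t : ℝ} (ht₀ : 0 ≤ t) (ht₁ : t ≤ 1) (m : ℕ) :
    t * ∑ v : List.Vector Bool m, (t ^ 2) ^ descents v.toList ≤ (1 + t) ^ m :=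
  (sum_pow_descents_le_and_cons_true_le ht₀ ht₁ m).1

end DescentCount

section Paths

/-- The vertices of the quasi-progression of diameter `1` with first term `a` whose consecutive
differences are `d` (letter `false`) or `d + 1` (letter `true`). -/
def pathVertices (d : ℕ) : ℕ → List Bool → Finset ℕ
  | a, [] => {a}
  | a, s :: w => insert a (pathVertices d (a + d + s.toNat) w)

/-- The points just left of those vertices of `pathVertices d a w` that are entered by a step
`d + 1` and left by a step `d`; replacing such a vertex by its left neighbour gives another
quasi-progression with the same low difference `d`. -/
def skippedPoints (d : ℕ) : ℕ → List Bool → Finset ℕ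
  | _, [] => ∅
  | a, false :: w => skippedPoints d (a + d) w
  | _, [true] => ∅
  | a, true :: true :: w => skippedPoints d (a + d + 1) (true :: w)
  | a, true :: false :: w => insert (a + d) (skippedPoints d (a + d + 1 + d) w)

variable {d a y : ℕ} {w : List Bool}

lemma le_of_mem_pathVertices (hy : y ∈ pathVertices d a w) : a ≤ y := by
  induction w generalizing a with
  | nil => simp_all [pathVertices]
  | cons s w ih =>
    obtain rfl | hy := Finset.mem_insert.1 hy
    · rfl
    · have := ih hy
      omega

lemma le_of_mem_skippedPoints (hy : y ∈ skippedPoints d a w) : a + d ≤ y := by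
  induction a, w using skippedPoints.induct d with
  | case1 | case3 => simp [skippedPoints] at hy
  | case2 a w ih | case4 a w ih =>
    have := ih hy
    omega
  | case5 a w ih =>
    obtain rfl | hy := Finset.mem_insert.1 hy
    · rfl
    · have := ih hy
      omega

lemma card_pathVertices (hd : 1 ≤ d) : (pathVertices d a w).card = w.length + 1 := by
  induction w generalizing a with
  | nil => simp [pathVertices]
  | cons s w ih =>
    rw [pathVertices, Finset.card_insert_of_notMem, ih, List.length_cons]
    intro h
    have := le_of_mem_pathVertices h
    omega

lemma card_skippedPoints : (skippedPoints d a w).card = descents w := by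
  induction a, w using skippedPoints.induct d with
  | case1 | case3 => simp [skippedPoints, descents]
  | case2 a w ih | case4 a w ih => simpa only [skippedPoints, descents] using ih
  | case5 a w ih =>
    rw [skippedPoints, Finset.card_insert_of_notMem, ih, descents]
    intro h
    have := le_of_mem_skippedPoints h
    omega

lemma disjoint_pathVertices_skippedPoints (hd : 1 ≤ d) :
    Disjoint (pathVertices d a w) (skippedPoints d a w) := by
  rw [Finset.disjoint_left]
  intro y hy hy'
  induction a, w using skippedPoints.induct d with
  | case1 | case3 => simp [skippedPoints] at hy'
  | case2 a w ih | case4 a w ih =>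
    have := le_of_mem_skippedPoints hy'
    obtain rfl | hy := Finset.mem_insert.1 hy
    · omega
    · exact ih hy hy'
  | case5 a w ih =>
    have hpath : y = a ∨ y = a + d + 1 ∨ y ∈ pathVertices d (a + d + 1 + d) w := by
      simpa only [pathVertices, Bool.toNat_true, Bool.toNat_false, add_zero, Finset.mem_insert]
        using hy
    have hpath_le := fun h : y ∈ pathVertices d (a + d + 1 + d) w ↦ le_of_mem_pathVertices h
    have hskip_le := fun h : y ∈ skippedPoints d (a + d + 1 + d) w ↦ le_of_mem_skippedPoints h
    obtain rfl | hskip := Finset.mem_insert.1 hy' <;> grind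

lemma exists_lt_cons_of_exists_lt {s : Bool}
    (h : ∃ w' < w, w'.length = w.length ∧
      pathVertices d (a + d + s.toNat) w' ⊆ insert y (pathVertices d (a + d + s.toNat) w)) :
    ∃ w' < s :: w, w'.length = (s :: w).length ∧
      pathVertices d a w' ⊆ insert y (pathVertices d a (s :: w)) := by
  obtain ⟨w', hlt, hlen, hsub⟩ := h
  refine ⟨s :: w', List.cons_lt_cons_iff.2 (.inr ⟨rfl, hlt⟩), by simp [hlen], ?_⟩
  rw [pathVertices, pathVertices, Finset.insert_comm]
  exact Finset.insert_subset_insert _ hsub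

lemma exists_lt_of_mem_skippedPoints (hy : y ∈ skippedPoints d a w) :
    ∃ w' < w, w'.length = w.length ∧ pathVertices d a w' ⊆ insert y (pathVertices d a w) := by
  induction a, w using skippedPoints.induct d with
  | case1 | case3 => simp [skippedPoints] at hy
  | case2 a w ih | case4 a w ih => exact exists_lt_cons_of_exists_lt (ih hy)
  | case5 a w ih =>
    obtain rfl | hy := Finset.mem_insert.1 hy
    · refine ⟨false :: true :: w, List.cons_lt_cons_iff.2 (.inl (by decide)), by simp, ?_⟩
      have h_end : a + d + d + 1 = a + d + 1 + d := by omega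
      simp only [pathVertices, Bool.toNat_true, Bool.toNat_false, add_zero, h_end]
      grind
    · exact exists_lt_cons_of_exists_lt (exists_lt_cons_of_exists_lt (ih hy))

lemma exists_pathVertices_skippedPoints {P : ℕ → Prop}
    (h : ∀ y ∈ pathVertices d a w, P y) :
    ∃ w' : List Bool, w'.length = w.length ∧ (∀ y ∈ pathVertices d a w', P y) ∧
      ∀ y ∈ skippedPoints d a w', ¬ P y := by
  let candidates := {w' : List Bool | w'.length = w.length ∧ ∀ y ∈ pathVertices d a w', P y}
  have hfin : candidates.Finite := (List.finite_length_eq Bool w.length).subset fun _ ↦ And.left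
  obtain ⟨w', ⟨hlen, hpath⟩, hmin⟩ := hfin.exists_minimal ⟨w, rfl, h⟩
  refine ⟨w', hlen, hpath, fun y hy hPy ↦ ?_⟩
  obtain ⟨v, hlt, hv_len, hv_sub⟩ := exists_lt_of_mem_skippedPoints hy
  have hv_path : ∀ z ∈ pathVertices d a v, P z := fun z hz ↦ by
    obtain rfl | hz := Finset.mem_insert.1 (hv_sub hz)
    exacts [hPy, hpath z hz]
  exact (hmin ⟨hv_len.trans hlen, hv_path⟩ hlt.le).not_gt hlt

end Paths

section QuasiProgressions

/-- The colouring `χ` has a monochromatic `k`-term quasi-progression of diameter `n` inside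
`{1, ..., N}`. -/
def HasMonoQuasiProg {κ : Type*} (n k N : ℕ) (χ : ℕ → κ) : Prop :=
  ∃ x : ℕ → ℕ, (∀ j < k, x j ∈ Finset.Icc 1 N) ∧ (∀ j < k, χ (x j) = χ (x 0)) ∧ IsQuasiProg n k x

lemma exists_pathVertices_subset_range {x : ℕ → ℕ} {d m : ℕ}
    (hx : ∀ j < m, x j + d ≤ x (j + 1) ∧ x (j + 1) ≤ x j + d + 1) :
    ∃ w : List Bool, w.length = m ∧ ∀ y ∈ pathVertices d (x 0) w, ∃ j ≤ m, x j = y := by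
  induction m generalizing x with
  | zero => exact ⟨[], rfl, by simp [pathVertices]⟩
  | succ m ih =>
    obtain ⟨w, hlen, hw⟩ := ih (x := fun j ↦ x (j + 1)) fun j hj ↦ hx (j + 1) (by omega)
    obtain ⟨s, hs⟩ : ∃ s : Bool, x 1 = x 0 + d + s.toNat := by
      have := hx 0 (by omega)
      rw [zero_add] at this
      obtain h | h : x 1 = x 0 + d ∨ x 1 = x 0 + d + 1 := by omega
      exacts [⟨false, h⟩, ⟨true, h⟩]
    refine ⟨s :: w, by simp [hlen], fun y hy ↦ ?_⟩
    rw [pathVertices, ← hs] at hy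
    obtain rfl | hy := Finset.mem_insert.1 hy
    · exact ⟨0, by omega, rfl⟩
    · obtain ⟨j, hj, rfl⟩ := hw y hy
      exact ⟨j + 1, by omega, rfl⟩

lemma add_mul_le_of_add_le {x : ℕ → ℕ} {d m : ℕ} (hx : ∀ j < m, x j + d ≤ x (j + 1)) :
    x 0 + m * d ≤ x m := by
  induction m with
  | zero => simp
  | succ m ih =>
    have := ih fun j hj ↦ hx j (by omega)
    have := hx m (by omega)
    rw [Nat.succ_mul]
    omega

/-- The path coded by `w` is monochromatic and none of its skipped points has its colour. Of the
monochromatic paths of given length with given `d` and `a`, the leftmost one has this property. -/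
def IsLeftmostMono {κ : Type*} (d a : ℕ) (w : List Bool) (χ : ℕ → κ) : Prop :=
  ∃ c, (∀ y ∈ pathVertices d a w, χ y = c) ∧ ∀ y ∈ skippedPoints d a w, χ y ≠ c

lemma HasMonoQuasiProg.exists_isLeftmostMono {κ : Type*} {χ : ℕ → κ} {m N : ℕ} (hm : 0 < m)
    (h : HasMonoQuasiProg 1 (m + 1) N χ) :
    ∃ a ∈ Finset.Icc 1 N, ∃ d ∈ Finset.Icc 1 (N / m), ∃ v : List.Vector Bool m,
      IsLeftmostMono d a v.toList χ := by
  obtain ⟨x, hxN, hmono, d, hd, hstep⟩ := h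
  replace hstep (j : ℕ) (hj : j < m) := hstep j (by omega)
  have hdN : d ≤ N / m := by
    rw [Nat.le_div_iff_mul_le hm, mul_comm]
    have := add_mul_le_of_add_le fun j hj ↦ (hstep j hj).1
    have := (Finset.mem_Icc.1 (hxN m (by omega))).2
    omega
  obtain ⟨w, hlen, hw⟩ := exists_pathVertices_subset_range hstep
  have hcolor : ∀ y ∈ pathVertices d (x 0) w, χ y = χ (x 0) := fun y hy ↦ by
    obtain ⟨j, hj, rfl⟩ := hw y hy
    exact hmono j (by omega)
  obtain ⟨w', hlen', hpath, hskip⟩ := exists_pathVertices_skippedPoints hcolor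
  exact ⟨x 0, hxN 0 (by omega), d, Finset.mem_Icc.2 ⟨hd, hdN⟩, ⟨w', hlen'.trans hlen⟩, χ (x 0),
    hpath, hskip⟩

end QuasiProgressions

section RandomColoring

open MeasureTheory

variable (κ : Type*) [Fintype κ] [Nonempty κ] [MeasurableSpace κ]

/-- The law of a uniformly random colouring of `ℕ`: the colours of distinct numbers are independent
and uniformly distributed on `κ`. -/
noncomputable def randomColoring : Measure (ℕ → κ) :=
  Measure.infinitePi fun _ ↦ (PMF.uniformOfFintype κ).toMeasure

instance : IsProbabilityMeasure (randomColoring κ) :=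
  inferInstanceAs (IsProbabilityMeasure (Measure.infinitePi _))

variable {κ} [MeasurableSingletonClass κ]

lemma uniformOfFintype_real_singleton (c : κ) :
    (PMF.uniformOfFintype κ).toMeasure.real {c} = 1 / Fintype.card κ := by
  rw [measureReal_def, PMF.toMeasure_apply_singleton _ _ (measurableSet_singleton c)]
  simp

lemma randomColoring_real_setOf {A B : Finset ℕ} (hAB : Disjoint A B) (c : κ) :
    (randomColoring κ).real {χ | (∀ y ∈ A, χ y = c) ∧ ∀ y ∈ B, χ y ≠ c} =
      (1 / Fintype.card κ) ^ A.card * (1 - 1 / Fintype.card κ) ^ B.card := by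
  classical
  let t (y : ℕ) : Set κ := if y ∈ A then {c} else {c}ᶜ
  have hA : ∀ y ∈ A, t y = {c} := fun y hy ↦ if_pos hy
  have hB : ∀ y ∈ B, t y = {c}ᶜ := fun y hy ↦ if_neg (Finset.disjoint_right.1 hAB hy)
  have hpi : {χ : ℕ → κ | (∀ y ∈ A, χ y = c) ∧ ∀ y ∈ B, χ y ≠ c} =
      Set.pi (A ∪ B : Finset ℕ) t := by
    ext χ
    simp only [Set.mem_ofPred_eq, Set.mem_pi, Finset.mem_coe, Finset.forall_mem_union]
    refine and_congr (forall₂_congr fun y hy ↦ ?_) (forall₂_congr fun y hy ↦ ?_)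
    · simp [hA y hy]
    · simp [hB y hy]
  have hcompl : (PMF.uniformOfFintype κ).toMeasure.real {c}ᶜ = 1 - 1 / Fintype.card κ := by
    rw [probReal_compl_eq_one_sub (measurableSet_singleton c), uniformOfFintype_real_singleton]
  rw [hpi, randomColoring, measureReal_def,
    Measure.infinitePi_pi _ fun y _ ↦ (Set.toFinite (t y)).measurableSet, ENNReal.toReal_prod,
    Finset.prod_union hAB]
  congr 1
  · refine Finset.prod_eq_pow_card fun y hy ↦ ?_
    rw [hA y hy, ← measureReal_def, uniformOfFintype_real_singleton]
  · refine Finset.prod_eq_pow_card fun y hy ↦ ?_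
    rw [hB y hy, ← measureReal_def, hcompl]

lemma randomColoring_real_isLeftmostMono_le {d : ℕ} (hd : 1 ≤ d) (a : ℕ) (w : List Bool) :
    (randomColoring κ).real {χ | IsLeftmostMono d a w χ} ≤
      (1 / Fintype.card κ) ^ w.length * (1 - 1 / Fintype.card κ) ^ descents w := by
  have hunion : {χ : ℕ → κ | IsLeftmostMono d a w χ} =
      ⋃ c, {χ | (∀ y ∈ pathVertices d a w, χ y = c) ∧ ∀ y ∈ skippedPoints d a w, χ y ≠ c} := by
    ext χ
    simp only [IsLeftmostMono, Set.mem_ofPred_eq, Set.mem_iUnion]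
  rw [hunion]
  refine (measureReal_iUnion_fintype_le _).trans (le_of_eq ?_)
  simp only [randomColoring_real_setOf (disjoint_pathVertices_skippedPoints hd),
    card_pathVertices hd, card_skippedPoints, Finset.sum_const, Finset.card_univ, nsmul_eq_mul,
    pow_succ]
  field_simp

lemma randomColoring_real_iUnion_isLeftmostMono_le {d : ℕ} (hd : 1 ≤ d) (a m : ℕ) :
    √(1 - 1 / Fintype.card κ) * (randomColoring κ).real
        (⋃ v : List.Vector Bool m, {χ | IsLeftmostMono d a v.toList χ}) ≤
      ((1 + √(1 - 1 / Fintype.card κ)) / Fintype.card κ) ^ m := by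
  have hq : (0 : ℝ) ≤ 1 - 1 / Fintype.card κ :=
    sub_nonneg.2 (div_le_one_of_le₀ (mod_cast Fintype.card_pos) (by positivity))
  set t := √(1 - 1 / Fintype.card κ)
  have ht_sq : (1 - 1 / Fintype.card κ : ℝ) = t ^ 2 := (Real.sq_sqrt hq).symm
  have ht₁ : t ≤ 1 := Real.sqrt_le_one.2 (sub_le_self _ (by positivity))
  calc t * (randomColoring κ).real
        (⋃ v : List.Vector Bool m, {χ | IsLeftmostMono d a v.toList χ})
      ≤ t * ∑ v : List.Vector Bool m,
          (1 / Fintype.card κ) ^ m * (t ^ 2) ^ descents v.toList := by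
        gcongr
        refine (measureReal_iUnion_fintype_le _).trans (Finset.sum_le_sum fun v _ ↦ ?_)
        simpa only [List.Vector.toList_length, ht_sq] using
          randomColoring_real_isLeftmostMono_le (κ := κ) hd a v.toList
    _ = (t * ∑ v : List.Vector Bool m, (t ^ 2) ^ descents v.toList) *
          (1 / Fintype.card κ) ^ m := by rw [← Finset.mul_sum]; ring
    _ ≤ (1 + t) ^ m * (1 / Fintype.card κ) ^ m := by
        gcongr
        exact sum_pow_descents_le (Real.sqrt_nonneg _) ht₁ m
    _ = ((1 + t) / Fintype.card κ) ^ m := by rw [← mul_pow, mul_one_div]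

lemma randomColoring_real_biUnion_isLeftmostMono_le (m N D : ℕ) :
    √(1 - 1 / Fintype.card κ) * (randomColoring κ).real
        (⋃ a ∈ Finset.Icc 1 N, ⋃ d ∈ Finset.Icc 1 D, ⋃ v : List.Vector Bool m,
          {χ | IsLeftmostMono d a v.toList χ}) ≤
      N * (D * ((1 + √(1 - 1 / Fintype.card κ)) / Fintype.card κ) ^ m) := by
  set t := √(1 - 1 / Fintype.card κ)
  let U (a d : ℕ) := ⋃ v : List.Vector Bool m, {χ : ℕ → κ | IsLeftmostMono d a v.toList χ}
  calc t * (randomColoring κ).real (⋃ a ∈ Finset.Icc 1 N, ⋃ d ∈ Finset.Icc 1 D, U a d)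
      ≤ t * ∑ a ∈ Finset.Icc 1 N, ∑ d ∈ Finset.Icc 1 D, (randomColoring κ).real (U a d) := by
        gcongr
        exact (measureReal_biUnion_finset_le _ _).trans
          (Finset.sum_le_sum fun a _ ↦ measureReal_biUnion_finset_le _ _)
    _ = ∑ a ∈ Finset.Icc 1 N, ∑ d ∈ Finset.Icc 1 D, t * (randomColoring κ).real (U a d) := by
        simp only [Finset.mul_sum]
    _ ≤ ∑ a ∈ Finset.Icc 1 N, ∑ d ∈ Finset.Icc 1 D, ((1 + t) / Fintype.card κ) ^ m :=
        Finset.sum_le_sum fun a _ ↦ Finset.sum_le_sum fun d hd ↦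
          randomColoring_real_iUnion_isLeftmostMono_le (Finset.mem_Icc.1 hd).1 a m
    _ = N * (D * ((1 + t) / Fintype.card κ) ^ m) := by simp

lemma exists_coloring_not_hasMonoQuasiProg {κ : Type*} [Fintype κ] [Nonempty κ] {m N : ℕ}
    (hm : 0 < m)
    (h : N * ((N / m : ℕ) * ((1 + √(1 - 1 / Fintype.card κ)) / Fintype.card κ) ^ m) <
      √(1 - 1 / Fintype.card κ)) :
    ∃ χ : ℕ → κ, ¬ HasMonoQuasiProg 1 (m + 1) N χ := by
  let _ : MeasurableSpace κ := ⊤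
  by_contra! hall
  have huniv : (⋃ a ∈ Finset.Icc 1 N, ⋃ d ∈ Finset.Icc 1 (N / m), ⋃ v : List.Vector Bool m,
      {χ : ℕ → κ | IsLeftmostMono d a v.toList χ}) = Set.univ :=
    Set.eq_univ_of_forall fun χ ↦ by
      simpa only [Set.mem_iUnion, exists_prop] using! (hall χ).exists_isLeftmostMono hm
  have hle := randomColoring_real_biUnion_isLeftmostMono_le (κ := κ) m N (N / m)
  rw [huniv, probReal_univ, mul_one] at hle
  exact h.not_ge hle

end RandomColoring

section VanDerWaerden

lemma exists_sum_line_eq_add_mul {ι : Type*} [Fintype ι] {k : ℕ}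
    (l : Combinatorics.Line (Fin k) ι) :
    ∃ b d : ℕ, 1 ≤ d ∧ ∀ j : Fin k, ∑ i, (l j i : ℕ) = b + j * d := by
  classical
  refine ⟨∑ i, (l.idxFun i).elim 0 Fin.val, ∑ i, if l.idxFun i = none then 1 else 0, ?_,
    fun j ↦ ?_⟩
  · obtain ⟨i, hi⟩ := l.proper
    calc 1 = if l.idxFun i = none then 1 else 0 := (if_pos hi).symm
      _ ≤ _ := Finset.single_le_sum (f := fun i ↦ if l.idxFun i = none then 1 else 0)
        (fun _ _ ↦ Nat.zero_le _) (Finset.mem_univ i)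
  · rw [Finset.mul_sum, ← Finset.sum_add_distrib]
    refine Finset.sum_congr rfl fun i _ ↦ ?_
    cases hi : l.idxFun i <;> simp [hi]

lemma exists_forall_mono_arithmeticProgression (κ : Type*) [Finite κ] (k : ℕ) :
    ∃ N, ∀ χ : ℕ → κ, ∃ a d : ℕ, 1 ≤ a ∧ 1 ≤ d ∧ ∃ c, ∀ j < k,
      a + j * d ≤ N ∧ χ (a + j * d) = c := by
  obtain ⟨ι, _, hι⟩ := Combinatorics.Line.exists_mono_in_high_dimension (Fin k) κ
  refine ⟨1 + Fintype.card ι * k, fun χ ↦ ?_⟩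
  obtain ⟨l, c, hl⟩ := hι fun v ↦ χ (1 + ∑ i, (v i : ℕ))
  obtain ⟨b, d, hd, hsum⟩ := exists_sum_line_eq_add_mul l
  refine ⟨1 + b, d, by omega, hd, c, fun j hj ↦ ?_⟩
  have hj_sum : 1 + b + j * d = 1 + ∑ i, (l ⟨j, hj⟩ i : ℕ) := by rw [hsum, add_assoc]
  rw [hj_sum]
  refine ⟨?_, hl ⟨j, hj⟩⟩
  gcongr
  calc ∑ i, (l ⟨j, hj⟩ i : ℕ) ≤ ∑ _ : ι, k := Finset.sum_le_sum fun i _ ↦ (l ⟨j, hj⟩ i).is_lt.le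
    _ = Fintype.card ι * k := by simp

lemma exists_forall_hasMonoQuasiProg (κ : Type*) [Finite κ] (n k : ℕ) :
    ∃ N, ∀ χ : ℕ → κ, HasMonoQuasiProg n k N χ := by
  obtain ⟨N, hN⟩ := exists_forall_mono_arithmeticProgression κ k
  refine ⟨N, fun χ ↦ ?_⟩
  obtain ⟨a, d, ha, hd, c, hc⟩ := hN χ
  refine ⟨fun j ↦ a + j * d, fun j hj ↦ Finset.mem_Icc.2 ⟨Nat.le_add_right_of_le ha, (hc j hj).1⟩,
    fun j hj ↦ (hc j hj).2.trans (hc 0 (by omega)).2.symm, d, hd, fun j _ ↦ ?_⟩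
  simp only [Nat.succ_mul]
  omega

/-- `Q n r k` is an infimum in `ℕ`, so it would be the junk value `0` if no `N` worked; van der
Waerden's theorem rules this out. -/
lemma hasMonoQuasiProg_Q {n r k : ℕ} (χ : ℕ → Fin r) : HasMonoQuasiProg n k (Q n r k) χ :=
  Nat.sInf_mem (exists_forall_hasMonoQuasiProg (Fin r) n k) χ

end VanDerWaerden

lemma mul_div_mul_div_pow_lt {r lam t : ℝ} {m N : ℕ} (hr : 0 < r) (hlam : 0 < lam)
    (hmr : r < m * (t * lam)) (hN : (N : ℝ) ≤ √(r / lam) ^ (m + 1)) :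
    N * ((N / m : ℕ) * (lam / r) ^ m) < t := by
  have hm : 0 < m := Nat.pos_of_ne_zero fun h ↦ by
    rw [h, Nat.cast_zero, zero_mul] at hmr
    exact hr.not_gt hmr
  have hsq : (N : ℝ) * N ≤ (r / lam) ^ (m + 1) :=
    calc (N : ℝ) * N ≤ √(r / lam) ^ (m + 1) * √(r / lam) ^ (m + 1) := by gcongr
      _ = (r / lam) ^ (m + 1) := by rw [← mul_pow, Real.mul_self_sqrt (by positivity)]
  calc (N : ℝ) * ((N / m : ℕ) * (lam / r) ^ m) ≤ N * (N / m * (lam / r) ^ m) := by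
        gcongr
        exact Nat.cast_div_le
    _ = N * N * (lam / r) ^ m / m := by ring
    _ ≤ (r / lam) ^ (m + 1) * (lam / r) ^ m / m := by gcongr
    _ = r / (m * lam) := by
        rw [pow_succ, mul_right_comm, ← mul_pow, div_mul_div_cancel₀ hlam.ne', div_self hr.ne',
          one_pow, one_mul, div_div, mul_comm lam]
    _ < t := by
        rw [div_lt_iff₀ (by positivity)]
        linarith

theorem Q_one_two_exponential_lower_bound_general {r k : ℕ} (hr : 2 ≤ r) (hk : r < k) :
    √(r / (1 + √(1 - 1 / r))) ^ k < (Q 1 r k : ℝ) := by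
  obtain ⟨m, rfl⟩ : ∃ m, k = m + 1 := ⟨k - 1, by omega⟩
  have : NeZero r := ⟨by omega⟩
  have hr_two : (2 : ℝ) ≤ r := mod_cast hr
  have hmr : (r : ℝ) ≤ m := mod_cast Nat.lt_succ_iff.1 hk
  have hinv : (1 / r : ℝ) ≤ 1 / 2 := one_div_le_one_div_of_le two_pos hr_two
  have hinv₀ : (0 : ℝ) < 1 / r := by positivity
  by_contra! hQ
  set t := √(1 - 1 / (r : ℝ))
  have ht_sq : t * t = 1 - 1 / r := Real.mul_self_sqrt (by linarith)
  have ht_one : 1 < t * (1 + t) := by nlinarith [Real.sqrt_nonneg (1 - 1 / (r : ℝ))]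
  have hlt := mul_div_mul_div_pow_lt (t := t) (by positivity) (by positivity) (by nlinarith) hQ
  obtain ⟨χ, hχ⟩ := exists_coloring_not_hasMonoQuasiProg (κ := Fin r) (m := m) (N := Q 1 r (m + 1))
    (by omega) (by simpa only [Fintype.card_fin] using hlt)
  exact hχ (hasMonoQuasiProg_Q χ)

/-- `Q_1(2,k) > β^k` for all sufficiently large `k`, where
`β = √(2/(1 + 1/√2)) ≈ 1.08239` is the smallest positive real root of `y⁴ - 8y² + 8`. -/
theorem Q_one_two_exponential_lower_bound :
    ∃ K : ℕ, ∀ k, K ≤ k →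
      (Real.sqrt (2 / (1 + 1 / Real.sqrt 2))) ^ k < (Q 1 2 k : ℝ) := by
  have hsqrt : √(1 - 1 / 2 : ℝ) = 1 / √2 := by norm_num
  exact ⟨3, fun k hk ↦ by
    simpa only [Nat.cast_ofNat, hsqrt] using Q_one_two_exponential_lower_bound_general le_rfl hk⟩
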